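/- arXiv:2209.06448 — 7 statements merged into one kernel-verified Lean document; each statement's English description precedes it below -/
import Mathlib

section
/- For every BRV A and all variables x and y, the following identities hold: σ^r_{x=y}(A) = A ∩ cyl^l_{{x}}(σ^lr_{x=y}(σ^lr_{x=x}(cyl^l_{{x}}(A)))) and σ^l_{x=y}(A) = A ∩ cyl^r_{{x}}(σ^lr_{y=x}(σ^lr_{x=x}(cyl^r_{{x}}(A)))). (Lemma: the left and right selections are expressible from cylindrifications, left-to-right selection, and intersection.) -/
/-- A binary relation on valuations (BRV). -/
abbrev BRV (V dom : Type*) := Set ((V → dom) × (V → dom))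

namespace BRV

variable {V dom : Type*}

/-- `ν1` and `ν2` agree on the set `Y` of variables. -/
def AgreeOn (ν1 ν2 : V → dom) (Y : Set V) : Prop := ∀ y ∈ Y, ν1 y = ν2 y

/-- Composition of BRVs. -/
def comp (A B : BRV V dom) : BRV V dom :=
  {p | ∃ ν3, (p.1, ν3) ∈ A ∧ (ν3, p.2) ∈ B}

/-- Left cylindrification. -/
def cyll (Z : Set V) (A : BRV V dom) : BRV V dom :=
  {p | ∃ ν1', (ν1', p.2) ∈ A ∧ AgreeOn ν1' p.1 Zᶜ}

/-- Right cylindrification. -/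
def cylr (Z : Set V) (A : BRV V dom) : BRV V dom :=
  {p | ∃ ν2', (p.1, ν2') ∈ A ∧ AgreeOn ν2' p.2 Zᶜ}

/-- Left selection. -/
def sell (x y : V) (A : BRV V dom) : BRV V dom := {p ∈ A | p.1 x = p.1 y}

/-- Right selection. -/
def selr (x y : V) (A : BRV V dom) : BRV V dom := {p ∈ A | p.2 x = p.2 y}

/-- Left-to-right selection. -/
def sellr (x y : V) (A : BRV V dom) : BRV V dom := {p ∈ A | p.1 x = p.2 y}

end BRV

/-!
The inner cylindrification frees `ν1 x`, so that it can be reset to `ν2 x`; the condition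
`ν1 x = ν2 y` then says `ν2 x = ν2 y`, which only concerns the right valuation and is therefore
unaffected by the outer cylindrification. The latter lets `ν1 x` return to its original value, so
intersecting with `A` loses no pair. The identity for the left selection is the one for the right
selection applied to the converse relation.
-/

namespace BRV

variable {V dom : Type*} {x : V} {Z : Set V}

theorem AgreeOn.symm {ν1 ν2 : V → dom} {Y : Set V} (h : AgreeOn ν1 ν2 Y) : AgreeOn ν2 ν1 Y :=
  fun z hz => (h z hz).symm

theorem agreeOn_update_compl [DecidableEq V] (hx : x ∈ Z) (ν : V → dom) (a : dom) :
    AgreeOn (Function.update ν x a) ν Zᶜ :=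
  fun _ hz => Function.update_of_ne (ne_of_mem_of_not_mem hx hz).symm a ν

theorem inter_selr (x y : V) (A B : BRV V dom) : A ∩ selr x y B = selr x y (A ∩ B) :=
  (Set.inter_assoc A B {p | p.2 x = p.2 y}).symm

theorem cyll_selr (Z : Set V) (x y : V) (A : BRV V dom) :
    cyll Z (selr x y A) = selr x y (cyll Z A) :=
  Set.ext fun _ =>
    ⟨fun ⟨ν, ⟨hA, hxy⟩, hν⟩ => ⟨⟨ν, hA, hν⟩, hxy⟩, fun ⟨⟨ν, hA, hν⟩, hxy⟩ => ⟨ν, ⟨hA, hxy⟩, hν⟩⟩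

theorem sellr_sellr_self (x y : V) (A : BRV V dom) :
    sellr x y (sellr x x A) = selr x y (sellr x x A) :=
  Set.ext fun _ => and_congr_right fun ⟨_, hx⟩ => by rw [hx]

theorem subset_cyll_sellr_self_cyll (hx : x ∈ Z) (A : BRV V dom) :
    A ⊆ cyll Z (sellr x x (cyll Z A)) := by
  classical
  rintro ⟨ν1, ν2⟩ hA
  have hν : AgreeOn (Function.update ν1 x (ν2 x)) ν1 Zᶜ := agreeOn_update_compl hx ν1 (ν2 x)
  have hx_eq : Function.update ν1 x (ν2 x) x = ν2 x := Function.update_self x (ν2 x) ν1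
  exact ⟨Function.update ν1 x (ν2 x), ⟨⟨ν1, hA, hν.symm⟩, hx_eq⟩, hν⟩

theorem selr_eq_inter_cyll (hx : x ∈ Z) (y : V) (A : BRV V dom) :
    selr x y A = A ∩ cyll Z (sellr x y (sellr x x (cyll Z A))) :=
  calc
    selr x y A = selr x y (A ∩ cyll Z (sellr x x (cyll Z A))) := by
      rw [Set.inter_eq_left.mpr (subset_cyll_sellr_self_cyll hx A)]
    _ = A ∩ cyll Z (selr x y (sellr x x (cyll Z A))) := by rw [cyll_selr, inter_selr]
    _ = A ∩ cyll Z (sellr x y (sellr x x (cyll Z A))) := by rw [sellr_sellr_self]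

theorem inv_selr (x y : V) (A : BRV V dom) :
    SetRel.inv (selr x y A) = sell x y (SetRel.inv A) :=
  rfl

theorem inv_cyll (Z : Set V) (A : BRV V dom) :
    SetRel.inv (cyll Z A) = cylr Z (SetRel.inv A) :=
  rfl

theorem inv_sellr (x y : V) (A : BRV V dom) :
    SetRel.inv (sellr x y A) = sellr y x (SetRel.inv A) :=
  Set.ext fun _ => and_congr_right fun _ => eq_comm

theorem sell_eq_inter_cylr (hx : x ∈ Z) (y : V) (A : BRV V dom) :
    sell x y A = A ∩ cylr Z (sellr y x (sellr x x (cylr Z A))) :=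
  calc
    sell x y A = SetRel.inv (selr x y (SetRel.inv A)) := by rw [inv_selr, SetRel.inv_inv]
    _ = SetRel.inv (SetRel.inv A ∩ cyll Z (sellr x y (sellr x x (cyll Z (SetRel.inv A))))) := by
      rw [← selr_eq_inter_cyll hx]
    _ = A ∩ SetRel.inv (cyll Z (sellr x y (sellr x x (cyll Z (SetRel.inv A))))) := rfl
    _ = A ∩ cylr Z (sellr y x (sellr x x (cylr Z A))) := by
      rw [inv_cyll, inv_sellr, inv_sellr, inv_cyll, SetRel.inv_inv]

end BRV

theorem stmt0_general {V dom : Type*} {x : V} {Z : Set V} (hx : x ∈ Z) (y : V) (A : BRV V dom) :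
    BRV.selr x y A
      = A ∩ BRV.cyll Z (BRV.sellr x y (BRV.sellr x x (BRV.cyll Z A))) ∧
    BRV.sell x y A
      = A ∩ BRV.cylr Z (BRV.sellr y x (BRV.sellr x x (BRV.cylr Z A))) :=
  ⟨BRV.selr_eq_inter_cyll hx y A, BRV.sell_eq_inter_cylr hx y A⟩

theorem stmt0 (V dom : Type*) [Countable dom] [Infinite dom]
    (A : BRV V dom) (x y : V) :
    BRV.selr x y A
      = A ∩ BRV.cyll {x} (BRV.sellr x y (BRV.sellr x x (BRV.cyll {x} A))) ∧
    BRV.sell x y A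
      = A ∩ BRV.cylr {x} (BRV.sellr y x (BRV.sellr x x (BRV.cylr {x} A))) :=
  stmt0_general (Set.mem_singleton x) y A
end

section
/- Let Q be a global BRV. If there exists a finite set of variables that determines Q on O^sem(Q), then I^sem(Q) determines Q on O^sem(Q). -/
/-- A global BRV: a function from interpretations to BRVs.
`I` is the type of interpretations. -/
abbrev GBRV (V dom I : Type*) := I → BRV V dom

/-- Semantic outputs of a global BRV. -/
def Osem {V dom I : Type*} (Q : GBRV V dom I) : Set V :=
  {x | ∃ (D : I) (p : (V → dom) × (V → dom)), p ∈ Q D ∧ p.1 x ≠ p.2 x}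

/-- `X` determines `Q` on `Y`. -/
def Determines {V dom I : Type*} (Q : GBRV V dom I) (X Y : Set V) : Prop :=
  ∀ (D : I), ∀ p ∈ Q D, ∀ ν1' : V → dom, BRV.AgreeOn ν1' p.1 X →
    ∃ ν2' : V → dom, BRV.AgreeOn ν2' p.2 Y ∧ (ν1', ν2') ∈ Q D

/-- Semantic inputs of a global BRV. -/
def Isem {V dom I : Type*} (Q : GBRV V dom I) : Set V :=
  {x | ¬ Determines Q ({x}ᶜ) (Osem Q)}

-- `ν` patched with the `X`-valuation `ν'` (the values of `ν'` outside `X` are irrelevant).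
open Classical in
noncomputable def patch {V dom : Type*} (ν ν' : V → dom) (X : Set V) : V → dom :=
  fun v => if v ∈ X then ν' v else ν v

/-- A global BRV is inertially cylindrified on `X`. -/
def InertCyl {V dom I : Type*} (Q : GBRV V dom I) (X : Set V) : Prop :=
  (∀ x ∈ X, x ∉ Osem Q) ∧
  ∀ (D : I), ∀ p ∈ Q D, ∀ ν' : V → dom,
    (patch p.1 ν' X, patch p.2 ν' X) ∈ Q D

/-!
The sets that determine `Q` on a fixed set `Y` form a filter: if `X` and `X'` both determine `Q` on
`Y`, one passes from `ν1` to a valuation agreeing with it on `X ∩ X'` by first changing only the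
variables outside `X` and then only those outside `X'`. The kernel of a filter consists of the
points whose complement is not a member, so for `Y = O^sem(Q)` the kernel is `I^sem(Q)`. If a filter
has a finite member, then deleting from it the finitely many points outside the kernel, one at a
time, leaves a member, so the kernel is a member.
-/

section FilterKernel

open Filter

variable {α : Type*} {f : Filter α}

theorem mem_ker_iff_compl_singleton_notMem {a : α} : a ∈ f.ker ↔ {a}ᶜ ∉ f := by
  refine ⟨fun ha h => mem_ker.mp ha _ h rfl, fun h => mem_ker.mpr fun s hs => ?_⟩
  by_contra has
  exact h (mem_of_superset hs (Set.subset_compl_singleton_iff.mpr has))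

theorem ker_mem_of_finite_mem {s : Set α} (hfin : s.Finite) (hs : s ∈ f) : f.ker ∈ f := by
  have removable : (⋂ a ∈ s \ f.ker, {a}ᶜ) ∈ f :=
    (biInter_mem hfin.sdiff).mpr fun a ha =>
      not_not.mp (mt mem_ker_iff_compl_singleton_notMem.mpr ha.2)
  filter_upwards [hs, removable] with a has ha
  by_contra hker
  exact Set.mem_iInter₂.mp ha a ⟨has, hker⟩ rfl

end FilterKernel

section Determines

variable {V dom I : Type*} {Q : GBRV V dom I} {X X' Y : Set V}

theorem determines_univ (Q : GBRV V dom I) (Y : Set V) : Determines Q Set.univ Y :=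
  fun _ p hp _ hag =>
    ⟨p.2, fun _ _ => rfl, (funext fun v => hag v (Set.mem_univ v)) ▸ hp⟩

theorem Determines.mono (hX : Determines Q X Y) (hsub : X ⊆ X') : Determines Q X' Y :=
  fun D p hp ν hν => hX D p hp ν fun v hv => hν v (hsub hv)

theorem Determines.inter (hX : Determines Q X Y) (hX' : Determines Q X' Y) :
    Determines Q (X ∩ X') Y := by
  classical
  intro D p hp ν hν
  let μ : V → dom := X.piecewise p.1 ν
  have μ_agree_left : BRV.AgreeOn μ p.1 X := X.piecewise_eqOn p.1 ν
  have μ_agree_right : BRV.AgreeOn ν μ X' := by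
    intro v hv
    by_cases hvX : v ∈ X
    · exact (hν v ⟨hvX, hv⟩).trans (μ_agree_left v hvX).symm
    · exact (X.piecewise_eq_of_notMem p.1 ν hvX).symm
  obtain ⟨μ', hμ', hμQ⟩ := hX D p hp μ μ_agree_left
  obtain ⟨ν', hν', hνQ⟩ := hX' D (μ, μ') hμQ ν μ_agree_right
  exact ⟨ν', fun v hv => (hν' v hv).trans (hμ' v hv), hνQ⟩

/-- The filter of all sets of variables that determine `Q` on `Y`. It is the bottom filter
when `Q` on `Y` does not depend on the input valuation at all. -/
def determiningFilter (Q : GBRV V dom I) (Y : Set V) : Filter V where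
  sets := {X | Determines Q X Y}
  univ_sets := determines_univ Q Y
  sets_of_superset := Determines.mono
  inter_sets := Determines.inter

theorem ker_determiningFilter (Q : GBRV V dom I) (Y : Set V) :
    (determiningFilter Q Y).ker = {x | ¬ Determines Q {x}ᶜ Y} :=
  Set.ext fun _ => mem_ker_iff_compl_singleton_notMem

end Determines

theorem stmt2_general {V dom I : Type*} (Q : GBRV V dom I) (Y : Set V)
    (h : ∃ X : Set V, X.Finite ∧ Determines Q X Y) :
    Determines Q {x | ¬ Determines Q {x}ᶜ Y} Y := by
  obtain ⟨X, hfin, hX⟩ := h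
  have ker_mem : (determiningFilter Q Y).ker ∈ determiningFilter Q Y :=
    ker_mem_of_finite_mem hfin hX
  rwa [ker_determiningFilter] at ker_mem

theorem stmt2 (V dom I : Type*) [Countable dom] [Infinite dom]
    (Q : GBRV V dom I)
    (h : ∃ X : Set V, X.Finite ∧ Determines Q X (Osem Q)) :
    Determines Q (Isem Q) (Osem Q) :=
  stmt2_general Q (Osem Q) h
end

section
/- Let Q be a global BRV such that I^sem(Q) determines Q on O^sem(Q). Then for every interpretation D, every (ν1,ν2) ∈ Q(D), and every valuation ν1' that agrees with ν1 both on I^sem(Q) and outside O^sem(Q), we have (ν1',ν2) ∈ Q(D). -/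
theorem BRV.AgreeOn.eqOn {V dom : Type*} {ν1 ν2 : V → dom} {Y : Set V}
    (h : BRV.AgreeOn ν1 ν2 Y) : Set.EqOn ν1 ν2 Y :=
  fun y hy => h y hy

theorem eq_of_eqOn_of_eqOn_compl {α β : Type*} {f g : α → β} {s : Set α}
    (hs : Set.EqOn f g s) (hsc : Set.EqOn f g sᶜ) : f = g :=
  (Set.eqOn_univ f g).mp (Set.union_compl_self s ▸ hs.union hsc)

section Osem

variable {V dom I : Type*} {Q : GBRV V dom I} {Y : Set V}

theorem eqOn_compl_of_Osem_subset (hY : Osem Q ⊆ Y) {D : I} {p : (V → dom) × (V → dom)}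
    (hp : p ∈ Q D) : Set.EqOn p.1 p.2 Yᶜ := by
  intro x hxY
  by_contra hne
  exact hxY (hY ⟨D, p, hp, hne⟩)

theorem eqOn_snd_compl_of_eqOn_fst_compl (hY : Osem Q ⊆ Y) {D D' : I}
    {p p' : (V → dom) × (V → dom)} (hp : p ∈ Q D) (hp' : p' ∈ Q D')
    (h : Set.EqOn p'.1 p.1 Yᶜ) : Set.EqOn p'.2 p.2 Yᶜ :=
  (eqOn_compl_of_Osem_subset hY hp').symm.trans (h.trans (eqOn_compl_of_Osem_subset hY hp))

end Osem

theorem stmt3_general {V dom I : Type*} {Q : GBRV V dom I} {X Y : Set V}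
    (h : Determines Q X Y) (hY : Osem Q ⊆ Y) {D : I} {p : (V → dom) × (V → dom)} (hp : p ∈ Q D)
    {ν1' : V → dom} (hX : BRV.AgreeOn ν1' p.1 X) (hYc : BRV.AgreeOn ν1' p.1 Yᶜ) :
    (ν1', p.2) ∈ Q D := by
  obtain ⟨ν2', h_on, h_mem⟩ := h D p hp ν1' hX
  have h_off : Set.EqOn ν2' p.2 Yᶜ := eqOn_snd_compl_of_eqOn_fst_compl hY hp h_mem hYc.eqOn
  have h_eq : ν2' = p.2 := eq_of_eqOn_of_eqOn_compl h_on.eqOn h_off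
  exact h_eq ▸ h_mem

theorem stmt3 (V dom I : Type*) [Countable dom] [Infinite dom]
    (Q : GBRV V dom I)
    (h : Determines Q (Isem Q) (Osem Q)) :
    ∀ (D : I), ∀ p ∈ Q D, ∀ ν1' : V → dom,
      BRV.AgreeOn ν1' p.1 (Isem Q) → BRV.AgreeOn ν1' p.1 (Osem Q)ᶜ →
      (ν1', p.2) ∈ Q D :=
  fun _ _ hp _ hI hO => stmt3_general h subset_rfl hp hI hO
end

section
/- (Inertia Property / Output Approximation) For every LIF expression α, every interpretation D, and every (ν1,ν2) ∈ ⟦α⟧_D, the valuations ν1 and ν2 agree outside O^syn(α); consequently O^sem(α) ⊆ O^syn(α). -/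
/-- A module vocabulary: each module name has an arity and an input arity. -/
structure Vocab (Name : Type*) where
  ar : Name → ℕ
  iar : Name → ℕ
  iar_le : ∀ M, iar M ≤ ar M

/-- LIF expressions over a module vocabulary. -/
inductive LIF (Name V : Type*) (voc : Vocab Name) : Type _ where
  | idE : LIF Name V voc
  | atom (M : Name) (xs ys : List V)
      (hx : xs.length = voc.iar M) (hy : ys.length = voc.ar M - voc.iar M) :
      LIF Name V voc
  | union (a b : LIF Name V voc) : LIF Name V voc
  | inter (a b : LIF Name V voc) : LIF Name V voc
  | diff  (a b : LIF Name V voc) : LIF Name V voc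
  | comp  (a b : LIF Name V voc) : LIF Name V voc
  | cyll (Z : Finset V) (a : LIF Name V voc) : LIF Name V voc
  | cylr (Z : Finset V) (a : LIF Name V voc) : LIF Name V voc
  | sellr (x y : V) (a : LIF Name V voc) : LIF Name V voc
  | sell (x y : V) (a : LIF Name V voc) : LIF Name V voc
  | selr (x y : V) (a : LIF Name V voc) : LIF Name V voc

/-- An interpretation assigns to each module name a relation over `dom`,
represented as a set of lists. -/
abbrev Interp (Name dom : Type*) := Name → Set (List dom)

namespace LIF

variable {Name V dom : Type*} {voc : Vocab Name}

/-- The semantics of a LIF expression under an interpretation. -/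
def sem (D : Interp Name dom) : LIF Name V voc → BRV V dom
  | .idE => {p | p.1 = p.2}
  | .atom M xs ys _ _ =>
      {p | (xs.map p.1 ++ ys.map p.2) ∈ D M ∧ BRV.AgreeOn p.1 p.2 {v | v ∈ ys}ᶜ}
  | .union a b => a.sem D ∪ b.sem D
  | .inter a b => a.sem D ∩ b.sem D
  | .diff a b  => a.sem D \ b.sem D
  | .comp a b  => BRV.comp (a.sem D) (b.sem D)
  | .cyll Z a  => BRV.cyll (↑Z) (a.sem D)
  | .cylr Z a  => BRV.cylr (↑Z) (a.sem D)
  | .sellr x y a => BRV.sellr x y (a.sem D)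
  | .sell x y a  => BRV.sell x y (a.sem D)
  | .selr x y a  => BRV.selr x y (a.sem D)

/-- The global BRV induced by a LIF expression. -/
def gsem (dom : Type*) (α : LIF Name V voc) : GBRV V dom (Interp Name dom) :=
  fun D => α.sem D

end LIF

namespace LIF

variable {Name V : Type*} {voc : Vocab Name} [DecidableEq V]

/-- Syntactic outputs of a LIF expression. -/
def Osyn : LIF Name V voc → Finset V
  | .idE => ∅
  | .atom _ _ ys _ _ => ys.toFinset
  | .union a b => a.Osyn ∪ b.Osyn
  | .inter a b => a.Osyn ∩ b.Osyn
  | .diff a _  => a.Osyn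
  | .comp a b  => a.Osyn ∪ b.Osyn
  | .cyll Z a  => a.Osyn ∪ Z
  | .cylr Z a  => a.Osyn ∪ Z
  | .sellr x y a => if x = y then a.Osyn \ {x} else a.Osyn
  | .sell _ _ a  => a.Osyn
  | .selr _ _ a  => a.Osyn

/-- Syntactic inputs of a LIF expression. -/
def Isyn : LIF Name V voc → Finset V
  | .idE => ∅
  | .atom _ xs _ _ _ => xs.toFinset
  | .union a b => a.Isyn ∪ b.Isyn ∪ ((a.Osyn \ b.Osyn) ∪ (b.Osyn \ a.Osyn))
  | .inter a b => a.Isyn ∪ b.Isyn ∪ ((a.Osyn \ b.Osyn) ∪ (b.Osyn \ a.Osyn))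
  | .diff a b  => a.Isyn ∪ b.Isyn ∪ ((a.Osyn \ b.Osyn) ∪ (b.Osyn \ a.Osyn))
  | .comp a b  => a.Isyn ∪ (b.Isyn \ a.Osyn)
  | .cyll Z a  => a.Isyn \ Z
  | .cylr _ a  => a.Isyn
  | .sellr x y a =>
      if x = y then (if y ∈ a.Osyn then a.Isyn ∪ {x} else a.Isyn)
      else (if y ∈ a.Osyn then a.Isyn ∪ {x} else a.Isyn ∪ {x, y})
  | .sell x y a => if x = y then a.Isyn else a.Isyn ∪ {x, y}
  | .selr x y a => if x = y then a.Isyn else a.Isyn ∪ ({x, y} \ a.Osyn)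

end LIF

namespace BRV

variable {V dom : Type*} {A B : BRV V dom} {Y Z : Set V}

/-- The inertia property of a BRV: it changes the values of variables in `Y` only. For a LIF
expression, `Y` is its set of syntactic outputs. -/
def InertOutside (A : BRV V dom) (Y : Set V) : Prop := ∀ p ∈ A, AgreeOn p.1 p.2 Yᶜ

theorem inertOutside_diagonal : InertOutside (Set.diagonal (V → dom)) ∅ :=
  fun _ hp v _ => congrFun hp v

namespace InertOutside

theorem anti_left (hB : InertOutside B Y) (hAB : A ⊆ B) : InertOutside A Y :=
  fun p hp => hB p (hAB hp)

theorem mono_right (hA : InertOutside A Y) (hYZ : Y ⊆ Z) : InertOutside A Z :=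
  fun p hp v hv => hA p hp v (mt (@hYZ v) hv)

theorem union (hA : InertOutside A Y) (hB : InertOutside B Z) :
    InertOutside (A ∪ B) (Y ∪ Z) := by
  rintro p (hp | hp)
  · exact hA.mono_right Set.subset_union_left p hp
  · exact hB.mono_right Set.subset_union_right p hp

theorem inter (hA : InertOutside A Y) (hB : InertOutside B Z) :
    InertOutside (A ∩ B) (Y ∩ Z) := by
  rintro p ⟨hpA, hpB⟩ v hv
  rcases not_and_or.1 hv with hvY | hvZ
  · exact hA p hpA v hvY
  · exact hB p hpB v hvZ

theorem diff (hA : InertOutside A Y) (B : BRV V dom) : InertOutside (A \ B) Y :=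
  hA.anti_left Set.sdiff_subset

theorem comp (hA : InertOutside A Y) (hB : InertOutside B Z) :
    InertOutside (BRV.comp A B) (Y ∪ Z) := by
  rintro ⟨ν₁, ν₂⟩ ⟨ν₃, h₁₃, h₃₂⟩ v hv
  obtain ⟨hvY, hvZ⟩ := not_or.1 hv
  exact (hA _ h₁₃ v hvY).trans (hB _ h₃₂ v hvZ)

theorem cyll (hA : InertOutside A Y) (Z : Set V) : InertOutside (BRV.cyll Z A) (Y ∪ Z) := by
  rintro ⟨ν₁, ν₂⟩ ⟨ν₁', hA', hν₁⟩ v hv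
  obtain ⟨hvY, hvZ⟩ := not_or.1 hv
  exact (hν₁ v hvZ).symm.trans (hA _ hA' v hvY)

theorem cylr (hA : InertOutside A Y) (Z : Set V) : InertOutside (BRV.cylr Z A) (Y ∪ Z) := by
  rintro ⟨ν₁, ν₂⟩ ⟨ν₂', hA', hν₂⟩ v hv
  obtain ⟨hvY, hvZ⟩ := not_or.1 hv
  exact (hA _ hA' v hvY).trans (hν₂ v hvZ)

theorem sell (hA : InertOutside A Y) (x y : V) : InertOutside (BRV.sell x y A) Y :=
  hA.anti_left (Set.sep_subset _ _)

theorem selr (hA : InertOutside A Y) (x y : V) : InertOutside (BRV.selr x y A) Y :=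
  hA.anti_left (Set.sep_subset _ _)

theorem sellr (hA : InertOutside A Y) (x y : V) : InertOutside (BRV.sellr x y A) Y :=
  hA.anti_left (Set.sep_subset _ _)

theorem sellr_self (hA : InertOutside A Y) (x : V) :
    InertOutside (BRV.sellr x x A) (Y \ {x}) := by
  rintro p ⟨hp, hpx⟩ v hv
  by_cases hvY : v ∈ Y
  · obtain rfl : v = x := by_contra fun hvx => hv ⟨hvY, hvx⟩
    exact hpx
  · exact hA p hp v hvY

end InertOutside

end BRV

theorem osem_subset_iff {V dom I : Type*} {Q : GBRV V dom I} {Y : Set V} :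
    Osem Q ⊆ Y ↔ ∀ D, BRV.InertOutside (Q D) Y := by
  constructor
  · intro hQ D p hp v hv
    by_contra hne
    exact hv (hQ ⟨D, p, hp, hne⟩)
  · rintro hQ v ⟨D, p, hp, hne⟩
    by_contra hv
    exact hne (hQ D p hp v hv)

theorem LIF.inertOutside_sem {Name V dom : Type*} {voc : Vocab Name} [DecidableEq V]
    (D : Interp Name dom) (α : LIF Name V voc) : BRV.InertOutside (α.sem D) α.Osyn := by
  induction α with
  | idE => simpa only [sem, Osyn, Finset.coe_empty, Set.diagonal] using BRV.inertOutside_diagonal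
  | atom M xs ys =>
    rintro p ⟨-, hp⟩
    simpa only [Osyn, List.coe_toFinset] using hp
  | union a b iha ihb => simpa only [sem, Osyn, Finset.coe_union] using iha.union ihb
  | inter a b iha ihb => simpa only [sem, Osyn, Finset.coe_inter] using iha.inter ihb
  | diff a b iha => exact iha.diff (b.sem D)
  | comp a b iha ihb => simpa only [sem, Osyn, Finset.coe_union] using iha.comp ihb
  | cyll Z a iha => simpa only [sem, Osyn, Finset.coe_union] using iha.cyll Z
  | cylr Z a iha => simpa only [sem, Osyn, Finset.coe_union] using iha.cylr Z
  | sellr x y a iha =>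
    by_cases hxy : x = y
    · subst hxy
      simpa only [sem, Osyn, if_true, Finset.coe_sdiff, Finset.coe_singleton] using
        iha.sellr_self x
    · simpa only [sem, Osyn, if_neg hxy] using iha.sellr x y
  | sell x y a iha => exact iha.sell x y
  | selr x y a iha => exact iha.selr x y

theorem stmt8_general {Name V : Type*} {voc : Vocab Name} [DecidableEq V] (dom : Type*) :
    (∀ (α : LIF Name V voc) (D : Interp Name dom), ∀ p ∈ α.sem D,
        BRV.AgreeOn p.1 p.2 (↑α.Osyn)ᶜ) ∧
    (∀ α : LIF Name V voc, Osem (LIF.gsem dom α) ⊆ ↑α.Osyn) :=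
  ⟨fun α D => α.inertOutside_sem D, fun α => osem_subset_iff.2 fun D => α.inertOutside_sem D⟩

theorem stmt8 {Name V : Type*} [Nonempty Name] {voc : Vocab Name} [DecidableEq V]
    (dom : Type*) [Countable dom] [Infinite dom] :
    (∀ (α : LIF Name V voc) (D : Interp Name dom), ∀ p ∈ α.sem D,
        BRV.AgreeOn p.1 p.2 (↑α.Osyn)ᶜ) ∧
    (∀ α : LIF Name V voc, Osem (LIF.gsem dom α) ⊆ ↑α.Osyn) :=
  stmt8_general dom
end

section
/- (Precision Theorem) Let α be a LIF expression that is either an atomic module expression, or a unary LIF operator (a cylindrification or a selection) applied to an atomic module expression, or a binary LIF operator (∪, ∩, ∖, ;) applied to two atomic module expressions involving distinct module names. Then O^sem(α) = O^syn(α) and I^sem(α) = I^syn(α). -/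
section Precision

variable {Name V : Type*} {voc : Vocab Name}

/-- `α` is an atomic module expression. -/
def LIF.IsAtom : LIF Name V voc → Prop
  | .atom _ _ _ _ _ => True
  | _ => False

/-- `a` and `b` are atomic module expressions involving distinct module names. -/
def DistinctAtoms (a b : LIF Name V voc) : Prop :=
  ∃ (M1 : Name) (xs1 ys1 : List V) (hx1 : xs1.length = voc.iar M1)
    (hy1 : ys1.length = voc.ar M1 - voc.iar M1)
    (M2 : Name) (xs2 ys2 : List V) (hx2 : xs2.length = voc.iar M2)
    (hy2 : ys2.length = voc.ar M2 - voc.iar M2),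
    a = LIF.atom M1 xs1 ys1 hx1 hy1 ∧ b = LIF.atom M2 xs2 ys2 hx2 hy2 ∧ M1 ≠ M2

/-- `α` is atomic, or a unary operator applied to an atomic module expression,
or a binary operator applied to two atomic module expressions with distinct names. -/
def PrecisionShape : LIF Name V voc → Prop
  | .idE => False
  | .atom _ _ _ _ _ => True
  | .union a b => DistinctAtoms a b
  | .inter a b => DistinctAtoms a b
  | .diff a b  => DistinctAtoms a b
  | .comp a b  => DistinctAtoms a b
  | .cyll _ a  => a.IsAtom
  | .cylr _ a  => a.IsAtom
  | .sellr _ _ a => a.IsAtom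
  | .sell _ _ a  => a.IsAtom
  | .selr _ _ a  => a.IsAtom

end Precision

/-!
Syntactic inputs and outputs are sound for every LIF expression: by induction, `α` changes only the
variables of `Osyn α`, and it ignores the initial value of every variable outside `Isyn α`.

Conversely, outputs are witnessed by letting the modules allow all tuples. For inputs, let the
modules allow only tuples with all entries equal to some `d`, so that the all-`d` valuation runs to
itself, and change one variable `z` to `e ≠ d`. An atom that reads `z` blocks this run. Otherwise
it overwrites `z` with `d` or preserves `e`, depending on whether `z` is one of its outputs, so two
atoms differing in this respect disagree. In unions and differences, distinct module names allow
the other operand to be interpreted separately: as empty, or, for the minuend of a difference, as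
unconstrained.
-/

open Function

namespace BRV

variable {V dom : Type*} {A B : BRV V dom} {O O₁ O₂ Z : Set V} {x y z : V}

/-- The BRV that rewrites the variables of `O` arbitrarily and preserves all others. The inclusion
`A ⊆ havoc O` expresses that all outputs of `A` lie in `O`. -/
def havoc (O : Set V) : BRV V dom := {p | AgreeOn p.1 p.2 Oᶜ}

theorem refl_mem_havoc (ν : V → dom) : (ν, ν) ∈ havoc O := fun _ _ => rfl

theorem havoc_mono (h : O₁ ⊆ O₂) : (havoc O₁ : BRV V dom) ⊆ havoc O₂ :=
  fun _ hp v hv => hp v fun hv₁ => hv (h hv₁)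

theorem inter_subset_havoc (hA : A ⊆ havoc O₁) (hB : B ⊆ havoc O₂) :
    A ∩ B ⊆ havoc (O₁ ∩ O₂) := by
  rintro p ⟨hpA, hpB⟩ v hv
  by_cases hv₁ : v ∈ O₁
  · exact hB hpB v fun hv₂ => hv ⟨hv₁, hv₂⟩
  · exact hA hpA v hv₁

theorem comp_subset_havoc (hA : A ⊆ havoc O₁) (hB : B ⊆ havoc O₂) :
    comp A B ⊆ havoc (O₁ ∪ O₂) := by
  rintro p ⟨ν₃, h₁, h₂⟩ v hv
  exact (hA h₁ v fun hv₁ => hv (.inl hv₁)).trans (hB h₂ v fun hv₂ => hv (.inr hv₂))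

theorem cyll_subset_havoc (hA : A ⊆ havoc O) : cyll Z A ⊆ havoc (O ∪ Z) := by
  rintro p ⟨ν₁, h₁, hag⟩ v hv
  exact (hag v fun hvZ => hv (.inr hvZ)).symm.trans (hA h₁ v fun hvO => hv (.inl hvO))

theorem cylr_subset_havoc (hA : A ⊆ havoc O) : cylr Z A ⊆ havoc (O ∪ Z) := by
  rintro p ⟨ν₂, h₂, hag⟩ v hv
  exact (hA h₂ v fun hvO => hv (.inl hvO)).trans (hag v fun hvZ => hv (.inr hvZ))

theorem sellr_self_subset_havoc (hA : A ⊆ havoc O) : sellr x x A ⊆ havoc (O \ {x}) := by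
  rintro p ⟨hp, hx⟩ v hv
  by_cases hvx : v = x
  · exact hvx ▸ hx
  · exact hA hp v fun hvO => hv ⟨hvO, hvx⟩

theorem sell_self : sell x x A = A := Set.sep_eq_self_iff_mem_true.2 fun _ _ => rfl

theorem selr_self : selr x x A = A := Set.sep_eq_self_iff_mem_true.2 fun _ _ => rfl

/-- The BRV that checks that every variable of `I` has value `d`, sets every variable of `O` to
`d`, and preserves the variables outside `O`. -/
def constStep (d : dom) (I O : Set V) : BRV V dom :=
  {p ∈ havoc O | (∀ v ∈ I, p.1 v = d) ∧ ∀ v ∈ O, p.2 v = d}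

theorem const_mem_constStep (d : dom) (I O : Set V) :
    (const V d, const V d) ∈ constStep d I O :=
  ⟨refl_mem_havoc _, fun _ _ => rfl, fun _ _ => rfl⟩

variable [DecidableEq V]

theorem update_left_mem_havoc (hz : z ∈ O) (ν : V → dom) (c : dom) :
    (update ν z c, ν) ∈ havoc O :=
  fun _ hv => update_of_ne (ne_of_mem_of_not_mem hz hv).symm _ _

theorem update_right_mem_havoc (hz : z ∈ O) (ν : V → dom) (c : dom) :
    (ν, update ν z c) ∈ havoc O :=
  fun v hv => (update_left_mem_havoc hz ν c v hv).symm

/-- `A`, regarded as having outputs `O`, does not depend on the initial value of `z`: changing that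
value yields another pair of `A`, in which the change shows up in the final value of `z` exactly
if `z` is preserved (`z ∉ O`). -/
structure Ignores (A : BRV V dom) (O : Set V) (z : V) : Prop where
  overwritten : z ∈ O → ∀ ν₁ ν₂ c, (ν₁, ν₂) ∈ A → (update ν₁ z c, ν₂) ∈ A
  preserved : z ∉ O → ∀ ν₁ ν₂ c, (ν₁, ν₂) ∈ A → (update ν₁ z c, update ν₂ z c) ∈ A

namespace Ignores

theorem union (hA : A.Ignores O₁ z) (hB : B.Ignores O₂ z) (hO : z ∈ O₁ ↔ z ∈ O₂) :
    Ignores (A ∪ B) (O₁ ∪ O₂) z where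
  overwritten hz ν₁ ν₂ c := by
    have hz₁ : z ∈ O₁ := hz.elim id hO.2
    exact Or.imp (hA.overwritten hz₁ ν₁ ν₂ c) (hB.overwritten (hO.1 hz₁) ν₁ ν₂ c)
  preserved hz ν₁ ν₂ c :=
    Or.imp (hA.preserved (fun h => hz (.inl h)) ν₁ ν₂ c)
      (hB.preserved (fun h => hz (.inr h)) ν₁ ν₂ c)

theorem inter (hA : A.Ignores O₁ z) (hB : B.Ignores O₂ z) (hO : z ∈ O₁ ↔ z ∈ O₂) :
    Ignores (A ∩ B) (O₁ ∩ O₂) z where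
  overwritten hz ν₁ ν₂ c :=
    And.imp (hA.overwritten hz.1 ν₁ ν₂ c) (hB.overwritten hz.2 ν₁ ν₂ c)
  preserved hz ν₁ ν₂ c := by
    have hz₁ : z ∉ O₁ := fun h => hz ⟨h, hO.1 h⟩
    exact And.imp (hA.preserved hz₁ ν₁ ν₂ c) (hB.preserved (mt hO.2 hz₁) ν₁ ν₂ c)

-- If the changed pair were in `B`, undoing the change would put the original pair in `B`.
theorem diff (hAO : A ⊆ havoc O₁) (hA : A.Ignores O₁ z) (hB : B.Ignores O₂ z)
    (hO : z ∈ O₁ ↔ z ∈ O₂) : Ignores (A \ B) O₁ z where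
  overwritten := by
    rintro hz ν₁ ν₂ c ⟨hpA, hpB⟩
    refine ⟨hA.overwritten hz ν₁ ν₂ c hpA, fun h => hpB ?_⟩
    simpa only [update_idem, update_eq_self] using
      hB.overwritten (hO.1 hz) _ _ (ν₁ z) h
  preserved := by
    rintro hz ν₁ ν₂ c ⟨hpA, hpB⟩
    refine ⟨hA.preserved hz ν₁ ν₂ c hpA, fun h => hpB ?_⟩
    have hν : ν₁ z = ν₂ z := hAO hpA z hz
    simpa only [update_idem, update_eq_self, hν ▸ update_eq_self z ν₂] using
      hB.preserved (mt hO.2 hz) _ _ (ν₁ z) h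

theorem comp (hA : A.Ignores O₁ z) (hB : z ∉ O₁ → B.Ignores O₂ z) :
    Ignores (BRV.comp A B) (O₁ ∪ O₂) z where
  overwritten := by
    rintro hz ν₁ ν₂ c ⟨ν₃, h₁, h₂⟩
    by_cases hz₁ : z ∈ O₁
    · exact ⟨ν₃, hA.overwritten hz₁ ν₁ ν₃ c h₁, h₂⟩
    · exact ⟨update ν₃ z c, hA.preserved hz₁ ν₁ ν₃ c h₁,
        (hB hz₁).overwritten (hz.resolve_left hz₁) ν₃ ν₂ c h₂⟩
  preserved := by
    rintro hz ν₁ ν₂ c ⟨ν₃, h₁, h₂⟩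
    have hz₁ : z ∉ O₁ := fun h => hz (.inl h)
    exact ⟨update ν₃ z c, hA.preserved hz₁ ν₁ ν₃ c h₁,
      (hB hz₁).preserved (fun h => hz (.inr h)) ν₃ ν₂ c h₂⟩

theorem cyll (hA : z ∉ Z → A.Ignores O z) : Ignores (BRV.cyll Z A) (O ∪ Z) z where
  overwritten := by
    rintro hz ν₁ ν₂ c ⟨ν₃, h₃, hag⟩
    by_cases hzZ : z ∈ Z
    · exact ⟨ν₃, h₃, fun v hv => by grind [hag v hv]⟩
    · exact ⟨update ν₃ z c, (hA hzZ).overwritten (hz.resolve_right hzZ) ν₃ ν₂ c h₃,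
        fun v hv => by grind [hag v hv]⟩
  preserved := by
    rintro hz ν₁ ν₂ c ⟨ν₃, h₃, hag⟩
    exact ⟨update ν₃ z c, (hA fun h => hz (.inr h)).preserved (fun h => hz (.inl h)) ν₃ ν₂ c h₃,
      fun v hv => by grind [hag v hv]⟩

theorem cylr (hA : A.Ignores O z) : Ignores (BRV.cylr Z A) (O ∪ Z) z where
  overwritten := by
    rintro hz ν₁ ν₂ c ⟨ν₃, h₃, hag⟩
    by_cases hzO : z ∈ O
    · exact ⟨ν₃, hA.overwritten hzO ν₁ ν₃ c h₃, hag⟩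
    · have hzZ : z ∈ Z := hz.resolve_left hzO
      exact ⟨update ν₃ z c, hA.preserved hzO ν₁ ν₃ c h₃, fun v hv => by grind [hag v hv]⟩
  preserved := by
    rintro hz ν₁ ν₂ c ⟨ν₃, h₃, hag⟩
    exact ⟨update ν₃ z c, hA.preserved (fun h => hz (.inl h)) ν₁ ν₃ c h₃,
      fun v hv => by grind [hag v hv]⟩

theorem sellr (hA : A.Ignores O z) (hx : z ≠ x) (hy : z = y → z ∈ O) :
    Ignores (BRV.sellr x y A) O z where
  overwritten := by
    rintro hz ν₁ ν₂ c ⟨hp, hxy⟩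
    exact ⟨hA.overwritten hz ν₁ ν₂ c hp, by grind⟩
  preserved := by
    rintro hz ν₁ ν₂ c ⟨hp, hxy⟩
    exact ⟨hA.preserved hz ν₁ ν₂ c hp, by grind⟩

theorem sellr_self (hA : A.Ignores O z) (hx : z = x → z ∉ O) :
    Ignores (BRV.sellr x x A) (O \ {x}) z where
  overwritten := by
    rintro ⟨hzO, hzx : z ≠ x⟩ ν₁ ν₂ c ⟨hp, hxx⟩
    exact ⟨hA.overwritten hzO ν₁ ν₂ c hp, (update_of_ne (Ne.symm hzx) _ _).trans hxx⟩
  preserved := by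
    rintro hz ν₁ ν₂ c ⟨hp, hxx⟩
    have hzO : z ∉ O := fun h => hz ⟨h, fun hzx => hx hzx h⟩
    exact ⟨hA.preserved hzO ν₁ ν₂ c hp, by grind⟩

theorem sell (hA : A.Ignores O z) (hx : z ≠ x) (hy : z ≠ y) :
    Ignores (BRV.sell x y A) O z where
  overwritten := by
    rintro hz ν₁ ν₂ c ⟨hp, hxy⟩
    exact ⟨hA.overwritten hz ν₁ ν₂ c hp, by grind⟩
  preserved := by
    rintro hz ν₁ ν₂ c ⟨hp, hxy⟩
    exact ⟨hA.preserved hz ν₁ ν₂ c hp, by grind⟩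

theorem selr (hA : A.Ignores O z) (hx : z = x → z ∈ O) (hy : z = y → z ∈ O) :
    Ignores (BRV.selr x y A) O z where
  overwritten := by
    rintro hz ν₁ ν₂ c ⟨hp, hxy⟩
    exact ⟨hA.overwritten hz ν₁ ν₂ c hp, hxy⟩
  preserved := by
    rintro hz ν₁ ν₂ c ⟨hp, hxy⟩
    exact ⟨hA.preserved hz ν₁ ν₂ c hp, by grind⟩

end Ignores

section ConstStep

variable {I : Set V} {d e : dom} {ν : V → dom}

theorem notMem_of_update_const_mem_constStep (hde : d ≠ e)
    (h : (update (const V d) z e, ν) ∈ constStep d I O) : z ∉ I :=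
  fun hz => hde (by simpa only [update_self] using (h.2.1 z hz).symm)

theorem eq_const_of_update_const_mem_constStep
    (h : (update (const V d) z e, ν) ∈ constStep d I O) (hz : z ∈ O) : ν = const V d := by
  funext v
  by_cases hv : v ∈ O
  · exact h.2.2 v hv
  · exact (h.1 v hv).symm.trans (update_of_ne (ne_of_mem_of_not_mem hz hv).symm _ _)

theorem eq_update_const_of_mem_constStep
    (h : (update (const V d) z e, ν) ∈ constStep d I O) (hz : z ∉ O) :
    ν = update (const V d) z e := by
  funext v
  by_cases hv : v ∈ O
  · rw [update_of_ne (ne_of_mem_of_not_mem hv hz)]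
    exact h.2.2 v hv
  · exact (h.1 v hv).symm

end ConstStep

theorem const_ne_update_const {d e : dom} (hde : d ≠ e) (z : V) :
    const V d ≠ update (const V d) z e :=
  fun h => hde (by simpa using congrFun h z)

theorem update_const_apply_ne {d e : dom} (hde : d ≠ e) (hxy : x ≠ y) (hz : z = x ∨ z = y) :
    update (const V d) z e x ≠ update (const V d) z e y := by
  rcases hz with rfl | rfl
  · simpa [hxy.symm] using hde.symm
  · simpa [hxy] using hde

end BRV

open BRV

section GlobalBRV

variable {V dom J : Type*} {Q : GBRV V dom J} {O : Set V} {z : V}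

theorem Osem_subset_of_subset_havoc (h : ∀ D, Q D ⊆ havoc O) : Osem Q ⊆ O := by
  rintro v ⟨D, p, hp, hv⟩
  exact by_contra fun hvO => hv (h D hp v hvO)

variable [DecidableEq V]

theorem notMem_Isem_of_ignores (hO : Osem Q ⊆ O) (h : ∀ D, (Q D).Ignores O z) :
    z ∉ Isem Q := by
  refine not_not.2 fun D p hp ν₁' hag => ?_
  have hν₁' : update p.1 z (ν₁' z) = ν₁' :=
    update_eq_iff.2 ⟨rfl, fun v hv => (hag v hv).symm⟩
  rw [← hν₁']
  by_cases hz : z ∈ O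
  · exact ⟨p.2, fun _ _ => rfl, (h D).overwritten hz p.1 p.2 _ hp⟩
  · exact ⟨update p.2 z _, fun v hv => update_of_ne (ne_of_mem_of_not_mem (hO hv) hz) _ _,
      (h D).preserved hz p.1 p.2 _ hp⟩

theorem mem_Isem_of_forall_notMem {D : J} {ν₁ ν₂ : V → dom} (hp : (ν₁, ν₂) ∈ Q D) (c : dom)
    (h : ∀ ν₂', AgreeOn ν₂' ν₂ (Osem Q) → (update ν₁ z c, ν₂') ∉ Q D) : z ∈ Isem Q := by
  intro hdet
  obtain ⟨ν₂', hag, hmem⟩ := hdet D (ν₁, ν₂) hp (update ν₁ z c) fun v hv => update_of_ne hv _ _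
  exact h ν₂' hag hmem

theorem mem_Osem_of_update_left_mem {D : J} {ν : V → dom} {c : dom}
    (h : (update ν z c, ν) ∈ Q D) (hc : c ≠ ν z) : z ∈ Osem Q :=
  ⟨D, _, h, by simpa only [update_self] using hc⟩

theorem mem_Osem_of_update_right_mem {D : J} {ν : V → dom} {c : dom}
    (h : (ν, update ν z c) ∈ Q D) (hc : c ≠ ν z) : z ∈ Osem Q :=
  ⟨D, _, h, by simpa only [update_self] using hc.symm⟩

end GlobalBRV

namespace DistinctAtoms

variable {Name V dom : Type*} {voc : Vocab Name} {a b : LIF Name V voc}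

theorem isAtom_left (h : DistinctAtoms a b) : a.IsAtom := by
  obtain ⟨_, _, _, _, _, _, _, _, _, _, rfl, -, -⟩ := h
  trivial

theorem isAtom_right (h : DistinctAtoms a b) : b.IsAtom := by
  obtain ⟨_, _, _, _, _, _, _, _, _, _, -, rfl, -⟩ := h
  trivial

theorem exists_sem_eq (h : DistinctAtoms a b) (D₁ D₂ : Interp Name dom) :
    ∃ D : Interp Name dom, a.sem D = a.sem D₁ ∧ b.sem D = b.sem D₂ := by
  classical
  obtain ⟨M₁, _, _, _, _, _, _, _, _, _, rfl, rfl, hM⟩ := h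
  exact ⟨update D₂ M₁ (D₁ M₁), by simp only [LIF.sem, update_self],
    by simp only [LIF.sem, update_of_ne hM.symm]⟩

end DistinctAtoms

namespace LIF

variable {Name V dom : Type*} {voc : Vocab Name} {a b : LIF Name V voc}

section Soundness

variable [DecidableEq V]

theorem sem_subset_havoc (D : Interp Name dom) (α : LIF Name V voc) :
    α.sem D ⊆ havoc ↑α.Osyn := by
  induction α with
  | idE => exact fun p hp v _ => congrFun hp v
  | atom M xs ys hx hy => exact fun p hp v hv => hp.2 v (by simpa [Osyn] using hv)
  | union a b iha ihb =>
    exact Finset.coe_union a.Osyn b.Osyn ▸ Set.union_subset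
      (iha.trans (havoc_mono Set.subset_union_left)) (ihb.trans (havoc_mono Set.subset_union_right))
  | inter a b iha ihb => exact Finset.coe_inter a.Osyn b.Osyn ▸ inter_subset_havoc iha ihb
  | diff a b iha _ => exact Set.sdiff_subset.trans iha
  | comp a b iha ihb => exact Finset.coe_union a.Osyn b.Osyn ▸ comp_subset_havoc iha ihb
  | cyll Z a ih => exact Finset.coe_union a.Osyn Z ▸ cyll_subset_havoc ih
  | cylr Z a ih => exact Finset.coe_union a.Osyn Z ▸ cylr_subset_havoc ih
  | sellr x y a ih =>
    by_cases hxy : x = y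
    · subst hxy
      rw [Osyn, if_pos rfl, Finset.coe_sdiff, Finset.coe_singleton]
      exact sellr_self_subset_havoc ih
    · rw [Osyn, if_neg hxy]
      exact (Set.sep_subset _ _).trans ih
  | sell x y a ih => exact (Set.sep_subset _ _).trans ih
  | selr x y a ih => exact (Set.sep_subset _ _).trans ih

theorem ignores_atom (D : Interp Name dom) {M : Name} {xs ys : List V}
    (hx : xs.length = voc.iar M) (hy : ys.length = voc.ar M - voc.iar M) {z : V} (hz : z ∉ xs) :
    ((atom M xs ys hx hy : LIF Name V voc).sem D).Ignores {v | v ∈ ys} z where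
  overwritten := by
    rintro hzy ν₁ ν₂ c ⟨hD, hag⟩
    have hxs : xs.map (update ν₁ z c) = xs.map ν₁ :=
      List.map_congr_left fun v hv => update_of_ne (ne_of_mem_of_not_mem hv hz) _ _
    exact ⟨hxs ▸ hD, fun v hv => by grind [hag v hv]⟩
  preserved := by
    rintro hzy ν₁ ν₂ c ⟨hD, hag⟩
    have hxs : xs.map (update ν₁ z c) = xs.map ν₁ :=
      List.map_congr_left fun v hv => update_of_ne (ne_of_mem_of_not_mem hv hz) _ _
    have hys : ys.map (update ν₂ z c) = ys.map ν₂ :=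
      List.map_congr_left fun v hv => update_of_ne (ne_of_mem_of_not_mem hv hzy) _ _
    exact ⟨hxs ▸ hys ▸ hD, fun v hv => by grind [hag v hv]⟩

theorem ignores_of_notMem_Isyn (D : Interp Name dom) {α : LIF Name V voc} {z : V}
    (hz : z ∉ α.Isyn) : (α.sem D).Ignores ↑α.Osyn z := by
  induction α with
  | idE => exact ⟨fun h => by simp [Osyn] at h, fun _ ν₁ ν₂ c hp => by
      exact congrArg (fun ν => update ν z c) hp⟩
  | atom M xs ys hx hy =>
    rw [Osyn, List.coe_toFinset]
    exact ignores_atom D hx hy (by simpa [Isyn] using hz)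
  | union a b iha ihb =>
    rw [Osyn, Finset.coe_union]
    exact (iha (by grind [Isyn])).union (ihb (by grind [Isyn])) (by grind [Isyn])
  | inter a b iha ihb =>
    rw [Osyn, Finset.coe_inter]
    exact (iha (by grind [Isyn])).inter (ihb (by grind [Isyn])) (by grind [Isyn])
  | diff a b iha ihb =>
    exact (iha (by grind [Isyn])).diff (sem_subset_havoc D a) (ihb (by grind [Isyn]))
      (by grind [Isyn, Osyn])
  | comp a b iha ihb =>
    rw [Osyn, Finset.coe_union]
    exact (iha (by grind [Isyn])).comp fun hza => ihb (by grind [Isyn])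
  | cyll Z a ih =>
    rw [Osyn, Finset.coe_union]
    exact .cyll fun hzZ => ih (by grind [Isyn])
  | cylr Z a ih =>
    rw [Osyn, Finset.coe_union]
    exact (ih hz).cylr
  | sellr x y a ih =>
    have ha := ih (by grind [Isyn])
    by_cases hxy : x = y
    · subst hxy
      rw [Osyn, if_pos rfl, Finset.coe_sdiff, Finset.coe_singleton]
      exact ha.sellr_self (by grind [Isyn])
    · rw [Osyn, if_neg hxy]
      exact ha.sellr (by grind [Isyn]) (by grind [Isyn])
  | sell x y a ih =>
    have ha := ih (by grind [Isyn])
    by_cases hxy : x = y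
    · subst hxy
      rwa [sem, sell_self]
    · exact ha.sell (by grind [Isyn]) (by grind [Isyn])
  | selr x y a ih =>
    have ha := ih (by grind [Isyn])
    by_cases hxy : x = y
    · subst hxy
      rwa [sem, selr_self]
    · exact ha.selr (by grind [Isyn]) (by grind [Isyn])

theorem Osem_gsem_subset_Osyn (α : LIF Name V voc) : Osem (gsem dom α) ⊆ ↑α.Osyn :=
  Osem_subset_of_subset_havoc fun D => sem_subset_havoc D α

theorem Isem_gsem_subset_Isyn (α : LIF Name V voc) : Isem (gsem dom α) ⊆ ↑α.Isyn :=
  fun _ hz => by_contra fun hzI => notMem_Isem_of_ignores (Osem_gsem_subset_Osyn α)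
    (fun D => ignores_of_notMem_Isyn D hzI) hz

end Soundness

/-- The interpretation of every module name by the empty relation, used to remove an operand
of a binary operator. -/
def emptyInterp : Interp Name dom := fun _ => ∅

/-- The interpretation of every module name by the set of all tuples, used to leave the outputs
of an atom unconstrained. -/
def univInterp : Interp Name dom := fun _ => Set.univ

/-- The interpretation of every module name by the set of all tuples with all entries equal
to `d`, used to make an atom depend on each of its inputs and fix each of its outputs. -/
def constInterp (d : dom) : Interp Name dom := fun _ => {l | ∀ u ∈ l, u = d}

namespace IsAtom

theorem exists_eq_atom (ha : a.IsAtom) : ∃ M xs ys hx hy, a = atom M xs ys hx hy :=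
  match a, ha with
  | atom M xs ys hx hy, _ => ⟨M, xs, ys, hx, hy, rfl⟩

theorem sem_emptyInterp (ha : a.IsAtom) : a.sem (emptyInterp : Interp Name dom) = ∅ := by
  obtain ⟨M, xs, ys, hx, hy, rfl⟩ := ha.exists_eq_atom
  simp [sem, emptyInterp]

theorem const_mem_sem_constInterp (ha : a.IsAtom) (d : dom) :
    (const V d, const V d) ∈ a.sem (constInterp d) := by
  obtain ⟨M, xs, ys, hx, hy, rfl⟩ := ha.exists_eq_atom
  exact ⟨by simp [constInterp], fun _ _ => rfl⟩

variable [DecidableEq V]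

theorem sem_univInterp (ha : a.IsAtom) :
    a.sem (univInterp : Interp Name dom) = havoc ↑a.Osyn := by
  obtain ⟨M, xs, ys, hx, hy, rfl⟩ := ha.exists_eq_atom
  simp [sem, univInterp, havoc, Osyn]

theorem sem_constInterp (ha : a.IsAtom) (d : dom) :
    a.sem (constInterp d) = constStep d ↑a.Isyn ↑a.Osyn := by
  obtain ⟨M, xs, ys, hx, hy, rfl⟩ := ha.exists_eq_atom
  simp [sem, constInterp, constStep, havoc, Isyn, Osyn, or_imp, forall_and, and_comm]

theorem notMem_sem_constInterp_of_mem_Isyn (ha : a.IsAtom) {d e : dom} (hde : d ≠ e) {z : V}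
    (hz : z ∈ a.Isyn) (ν : V → dom) : (update (const V d) z e, ν) ∉ a.sem (constInterp d) :=
  fun h => notMem_of_update_const_mem_constStep hde ((ha.sem_constInterp d).subset h) hz

end IsAtom

theorem gsem_union_comm : gsem dom (union a b) = gsem dom (union b a) :=
  funext fun _ => Set.union_comm _ _

variable [DecidableEq V] [Nontrivial dom] {x y : V} {Z : Finset V}

section Outputs

theorem IsAtom.Osyn_subset_Osem (ha : a.IsAtom) : ↑a.Osyn ⊆ Osem (gsem dom a) := by
  obtain ⟨d, e, hde⟩ := exists_pair_ne dom
  intro z hz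
  exact mem_Osem_of_update_left_mem (ν := const V d)
    (ha.sem_univInterp.superset (update_left_mem_havoc hz _ e)) hde.symm

theorem Osyn_union_subset_Osem (ha : a.IsAtom) (hb : b.IsAtom) :
    ↑(union a b).Osyn ⊆ Osem (gsem dom (union a b)) := by
  obtain ⟨d, e, hde⟩ := exists_pair_ne dom
  intro z hz
  exact mem_Osem_of_update_left_mem (ν := const V d) ((Finset.mem_union.1 hz).imp
    (fun hza => ha.sem_univInterp.superset (update_left_mem_havoc hza _ e))
    (fun hzb => hb.sem_univInterp.superset (update_left_mem_havoc hzb _ e))) hde.symm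

theorem Osyn_inter_subset_Osem (ha : a.IsAtom) (hb : b.IsAtom) :
    ↑(inter a b).Osyn ⊆ Osem (gsem dom (inter a b)) := by
  obtain ⟨d, e, hde⟩ := exists_pair_ne dom
  intro z hz
  exact mem_Osem_of_update_left_mem (ν := const V d) ((Finset.mem_inter.1 hz).imp
    (fun hza => ha.sem_univInterp.superset (update_left_mem_havoc hza _ e))
    (fun hzb => hb.sem_univInterp.superset (update_left_mem_havoc hzb _ e))) hde.symm

theorem Osyn_diff_subset_Osem (h : DistinctAtoms a b) :
    ↑(diff a b).Osyn ⊆ Osem (gsem dom (diff a b)) := by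
  obtain ⟨d, e, hde⟩ := exists_pair_ne dom
  obtain ⟨D, hDa, hDb⟩ := h.exists_sem_eq (univInterp : Interp Name dom) emptyInterp
  rw [h.isAtom_left.sem_univInterp] at hDa
  rw [h.isAtom_right.sem_emptyInterp] at hDb
  intro z hz
  exact mem_Osem_of_update_left_mem (D := D) (ν := const V d)
    ⟨hDa.superset (update_left_mem_havoc hz _ e), fun hmem => hDb.subset hmem⟩ hde.symm

theorem Osyn_comp_subset_Osem (ha : a.IsAtom) (hb : b.IsAtom) :
    ↑(comp a b).Osyn ⊆ Osem (gsem dom (comp a b)) := by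
  obtain ⟨d, e, hde⟩ := exists_pair_ne dom
  intro z hz
  refine mem_Osem_of_update_left_mem (c := e) (D := univInterp) (ν := const V d) ?_ hde.symm
  rcases Finset.mem_union.1 hz with hza | hzb
  · exact ⟨const V d, ha.sem_univInterp.superset (update_left_mem_havoc hza _ e),
      hb.sem_univInterp.superset (refl_mem_havoc _)⟩
  · exact ⟨_, ha.sem_univInterp.superset (refl_mem_havoc _),
      hb.sem_univInterp.superset (update_left_mem_havoc hzb _ e)⟩

theorem Osyn_cyll_subset_Osem (ha : a.IsAtom) :
    ↑(cyll Z a).Osyn ⊆ Osem (gsem dom (cyll Z a)) := by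
  obtain ⟨d, e, hde⟩ := exists_pair_ne dom
  intro z hz
  refine mem_Osem_of_update_left_mem (c := e) (D := univInterp) (ν := const V d) ?_ hde.symm
  rcases Finset.mem_union.1 hz with hza | hzZ
  · exact ⟨_, ha.sem_univInterp.superset (update_left_mem_havoc hza _ e), refl_mem_havoc _⟩
  · exact ⟨_, ha.sem_univInterp.superset (refl_mem_havoc _), update_right_mem_havoc hzZ _ e⟩

theorem Osyn_cylr_subset_Osem (ha : a.IsAtom) :
    ↑(cylr Z a).Osyn ⊆ Osem (gsem dom (cylr Z a)) := by
  obtain ⟨d, e, hde⟩ := exists_pair_ne dom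
  intro z hz
  refine mem_Osem_of_update_left_mem (c := e) (D := univInterp) (ν := const V d) ?_ hde.symm
  rcases Finset.mem_union.1 hz with hza | hzZ
  · exact ⟨_, ha.sem_univInterp.superset (update_left_mem_havoc hza _ e), refl_mem_havoc _⟩
  · exact ⟨_, ha.sem_univInterp.superset (refl_mem_havoc _), update_left_mem_havoc hzZ _ e⟩

theorem Osyn_sellr_subset_Osem (ha : a.IsAtom) :
    ↑(sellr x y a).Osyn ⊆ Osem (gsem dom (sellr x y a)) := by
  obtain ⟨d, e, hde⟩ := exists_pair_ne dom
  intro z hz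
  have hza : z ∈ a.Osyn := by grind [Osyn]
  by_cases hzx : z = x
  · have hyz : y ≠ z := by grind [Osyn]
    exact mem_Osem_of_update_right_mem (ν := const V d)
      ⟨ha.sem_univInterp.superset (update_right_mem_havoc hza _ e),
        by simp [hyz]⟩ hde.symm
  · exact mem_Osem_of_update_left_mem (ν := const V d)
      ⟨ha.sem_univInterp.superset (update_left_mem_havoc hza _ e),
        update_of_ne (Ne.symm hzx) e (const V d)⟩ hde.symm

theorem Osyn_sell_subset_Osem (ha : a.IsAtom) :
    ↑(sell x y a).Osyn ⊆ Osem (gsem dom (sell x y a)) := by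
  obtain ⟨d, e, hde⟩ := exists_pair_ne dom
  intro z hz
  exact mem_Osem_of_update_right_mem (ν := const V d)
    ⟨ha.sem_univInterp.superset (update_right_mem_havoc hz _ e), rfl⟩ hde.symm

theorem Osyn_selr_subset_Osem (ha : a.IsAtom) :
    ↑(selr x y a).Osyn ⊆ Osem (gsem dom (selr x y a)) := by
  obtain ⟨d, e, hde⟩ := exists_pair_ne dom
  intro z hz
  exact mem_Osem_of_update_left_mem (ν := const V d)
    ⟨ha.sem_univInterp.superset (update_left_mem_havoc hz _ e), rfl⟩ hde.symm

end Outputs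

section Inputs

theorem IsAtom.Isyn_subset_Isem (ha : a.IsAtom) : ↑a.Isyn ⊆ Isem (gsem dom a) := by
  obtain ⟨d, e, hde⟩ := exists_pair_ne dom
  intro z hz
  exact mem_Isem_of_forall_notMem (ha.const_mem_sem_constInterp d) e fun ν _ =>
    ha.notMem_sem_constInterp_of_mem_Isyn hde hz ν

theorem mem_Isem_union_of_sem_right_eq_empty {D : Interp Name dom} {d : dom}
    (hDa : a.sem D = constStep d ↑a.Isyn ↑a.Osyn) (hDb : b.sem D = ∅) {z : V}
    (hz : z ∈ a.Isyn ∨ z ∈ Osem (gsem dom (union a b)) ∧ z ∉ a.Osyn) :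
    z ∈ Isem (gsem dom (union a b)) := by
  obtain ⟨e, hed⟩ := exists_ne d
  refine mem_Isem_of_forall_notMem (D := D) (.inl (hDa.superset (const_mem_constStep d _ _))) e ?_
  rintro ν hag (hmem | hmem)
  · obtain hza | ⟨hzO, hza⟩ := hz
    · exact notMem_of_update_const_mem_constStep hed.symm (hDa.subset hmem) hza
    -- Although `z` is an output of the union, `a` has to preserve it, so its final value depends on
    -- its initial value.
    · have hν : ν = update (const V d) z e := eq_update_const_of_mem_constStep (hDa.subset hmem) hza
      exact hed (by simpa [hν] using hag z hzO)
  · exact hDb.subset hmem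

theorem Isyn_union_subset_Isem (h : DistinctAtoms a b) :
    ↑(union a b).Isyn ⊆ Isem (gsem dom (union a b)) := by
  obtain ⟨d⟩ : Nonempty dom := inferInstance
  intro z hz
  have hO : z ∈ (union a b).Osyn → z ∈ Osem (gsem dom (union a b)) :=
    fun hzO => Osyn_union_subset_Osem h.isAtom_left h.isAtom_right hzO
  by_cases hza : z ∈ a.Isyn ∨ z ∈ b.Osyn ∧ z ∉ a.Osyn
  · obtain ⟨D, hDa, hDb⟩ := h.exists_sem_eq (constInterp d) emptyInterp
    rw [h.isAtom_left.sem_constInterp] at hDa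
    rw [h.isAtom_right.sem_emptyInterp] at hDb
    exact mem_Isem_union_of_sem_right_eq_empty hDa hDb (by grind [Osyn])
  · obtain ⟨D, hDa, hDb⟩ := h.exists_sem_eq emptyInterp (constInterp d)
    rw [h.isAtom_left.sem_emptyInterp] at hDa
    rw [h.isAtom_right.sem_constInterp] at hDb
    rw [gsem_union_comm] at hO ⊢
    exact mem_Isem_union_of_sem_right_eq_empty hDb hDa (by grind [Isyn, Osyn])

theorem Isyn_inter_subset_Isem (ha : a.IsAtom) (hb : b.IsAtom) :
    ↑(inter a b).Isyn ⊆ Isem (gsem dom (inter a b)) := by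
  obtain ⟨d, e, hde⟩ := exists_pair_ne dom
  intro z hz
  refine mem_Isem_of_forall_notMem
    ⟨ha.const_mem_sem_constInterp d, hb.const_mem_sem_constInterp d⟩ e ?_
  rintro ν - ⟨hma, hmb⟩
  have hIa : z ∉ a.Isyn := fun hz => ha.notMem_sem_constInterp_of_mem_Isyn hde hz ν hma
  have hIb : z ∉ b.Isyn := fun hz => hb.notMem_sem_constInterp_of_mem_Isyn hde hz ν hmb
  rw [ha.sem_constInterp] at hma
  rw [hb.sem_constInterp] at hmb
  have hzO : z ∈ a.Osyn ∧ z ∉ b.Osyn ∨ z ∈ b.Osyn ∧ z ∉ a.Osyn := by grind [Isyn]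
  apply const_ne_update_const hde z
  rcases hzO with ⟨hza, hzb⟩ | ⟨hzb, hza⟩
  · exact (eq_const_of_update_const_mem_constStep hma hza).symm.trans
      (eq_update_const_of_mem_constStep hmb hzb)
  · exact (eq_const_of_update_const_mem_constStep hmb hzb).symm.trans
      (eq_update_const_of_mem_constStep hma hza)

theorem mem_Isem_diff_of_sem_right_eq_empty {D : Interp Name dom} {d : dom}
    (hDa : a.sem D = constStep d ↑a.Isyn ↑a.Osyn) (hDb : b.sem D = ∅) {z : V} (hz : z ∈ a.Isyn) :
    z ∈ Isem (gsem dom (diff a b)) := by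
  obtain ⟨e, hed⟩ := exists_ne d
  refine mem_Isem_of_forall_notMem (D := D)
    ⟨hDa.superset (const_mem_constStep d _ _), fun hmem => hDb.subset hmem⟩ e ?_
  exact fun ν _ hmem => notMem_of_update_const_mem_constStep hed.symm (hDa.subset hmem.1) hz

-- The all-`d` state runs to itself in `b`, hence not in the difference. Changing `z` to `e` makes
-- `b` disagree with the unconstrained `a`, since `b` either reads `z` or treats it differently.
theorem mem_Isem_diff_of_sem_left_eq_havoc {D : Interp Name dom} {d : dom}
    (hDa : a.sem D = havoc ↑a.Osyn) (hDb : b.sem D = constStep d ↑b.Isyn ↑b.Osyn)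
    (hO : ↑a.Osyn ⊆ Osem (gsem dom (diff a b))) {z : V}
    (hz : z ∈ b.Isyn ∨ (z ∈ a.Osyn ∧ z ∉ b.Osyn ∨ z ∈ b.Osyn ∧ z ∉ a.Osyn)) :
    z ∈ Isem (gsem dom (diff a b)) := by
  obtain ⟨e, hed⟩ := exists_ne d
  have hreset : update (update (const V d) z e) z d = const V d := by simp
  have hblock (ν₂ : V → dom) (hν₂ : ∀ v ∈ a.Osyn, ν₂ v = d) (ν : V → dom)
      (hag : AgreeOn ν ν₂ (Osem (gsem dom (diff a b)))) :
      (update (update (const V d) z e) z d, ν) ∉ (diff a b).sem D := by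
    rintro ⟨hma, hmb⟩
    rw [hreset] at hma hmb
    have hν : ν = const V d := by
      funext v
      by_cases hv : v ∈ a.Osyn
      · exact (hag v (hO hv)).trans (hν₂ v hv)
      · exact (hDa.subset hma v hv).symm
    rw [hν] at hmb
    exact hmb (hDb.superset (const_mem_constStep d _ _))
  by_cases hza : z ∈ a.Osyn
  · refine mem_Isem_of_forall_notMem (ν₂ := const V d)
      ⟨hDa.superset (update_left_mem_havoc hza _ e), fun hmb => ?_⟩ d
      (hblock _ fun _ _ => rfl)
    have hzb := notMem_of_update_const_mem_constStep hed.symm (hDb.subset hmb)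
    exact const_ne_update_const hed.symm z
      (eq_update_const_of_mem_constStep (hDb.subset hmb) (by grind))
  · refine mem_Isem_of_forall_notMem (ν₂ := update (const V d) z e)
      ⟨hDa.superset (refl_mem_havoc _), fun hmb => ?_⟩ d
      (hblock _ fun v hv => update_of_ne (ne_of_mem_of_not_mem hv hza) _ _)
    have hzb := notMem_of_update_const_mem_constStep hed.symm (hDb.subset hmb)
    exact const_ne_update_const hed.symm z
      (eq_const_of_update_const_mem_constStep (hDb.subset hmb) (by grind)).symm

theorem Isyn_diff_subset_Isem (h : DistinctAtoms a b) :
    ↑(diff a b).Isyn ⊆ Isem (gsem dom (diff a b)) := by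
  obtain ⟨d⟩ : Nonempty dom := inferInstance
  intro z hz
  by_cases hza : z ∈ a.Isyn
  · obtain ⟨D, hDa, hDb⟩ := h.exists_sem_eq (constInterp d) emptyInterp
    rw [h.isAtom_left.sem_constInterp] at hDa
    rw [h.isAtom_right.sem_emptyInterp] at hDb
    exact mem_Isem_diff_of_sem_right_eq_empty hDa hDb hza
  · obtain ⟨D, hDa, hDb⟩ := h.exists_sem_eq univInterp (constInterp d)
    rw [h.isAtom_left.sem_univInterp] at hDa
    rw [h.isAtom_right.sem_constInterp] at hDb
    exact mem_Isem_diff_of_sem_left_eq_havoc hDa hDb (Osyn_diff_subset_Osem h)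
      (by grind [Isyn])

theorem Isyn_comp_subset_Isem (ha : a.IsAtom) (hb : b.IsAtom) :
    ↑(comp a b).Isyn ⊆ Isem (gsem dom (comp a b)) := by
  obtain ⟨d, e, hde⟩ := exists_pair_ne dom
  intro z hz
  refine mem_Isem_of_forall_notMem
    ⟨const V d, ha.const_mem_sem_constInterp d, hb.const_mem_sem_constInterp d⟩ e ?_
  rintro ν₂ - ⟨ν₃, hma, hmb⟩
  by_cases hza : z ∈ a.Isyn
  · exact ha.notMem_sem_constInterp_of_mem_Isyn hde hza ν₃ hma
  · obtain ⟨hzb, hzO⟩ : z ∈ b.Isyn ∧ z ∉ a.Osyn := by grind [Isyn]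
    obtain rfl : ν₃ = update (const V d) z e :=
      eq_update_const_of_mem_constStep ((ha.sem_constInterp d).subset hma) hzO
    exact hb.notMem_sem_constInterp_of_mem_Isyn hde hzb ν₂ hmb

theorem Isyn_cyll_subset_Isem (ha : a.IsAtom) :
    ↑(cyll Z a).Isyn ⊆ Isem (gsem dom (cyll Z a)) := by
  obtain ⟨d, e, hde⟩ := exists_pair_ne dom
  intro z hz
  obtain ⟨hza, hzZ⟩ : z ∈ a.Isyn ∧ z ∉ Z := Finset.mem_sdiff.1 hz
  refine mem_Isem_of_forall_notMem
    ⟨const V d, ha.const_mem_sem_constInterp d, fun _ _ => rfl⟩ e ?_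
  rintro ν₂ - ⟨ν₁, hma, hag⟩
  have he : ν₁ z = e := by simpa using hag z hzZ
  have hd : ν₁ z = d := ((ha.sem_constInterp d).subset hma).2.1 z hza
  exact hde (hd.symm.trans he)

theorem Isyn_cylr_subset_Isem (ha : a.IsAtom) :
    ↑(cylr Z a).Isyn ⊆ Isem (gsem dom (cylr Z a)) := by
  obtain ⟨d, e, hde⟩ := exists_pair_ne dom
  intro z hz
  refine mem_Isem_of_forall_notMem
    ⟨const V d, ha.const_mem_sem_constInterp d, fun _ _ => rfl⟩ e ?_
  rintro ν₂ - ⟨ν₃, hma, -⟩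
  exact ha.notMem_sem_constInterp_of_mem_Isyn hde hz ν₃ hma

theorem Isyn_sellr_subset_Isem (ha : a.IsAtom) :
    ↑(sellr x y a).Isyn ⊆ Isem (gsem dom (sellr x y a)) := by
  obtain ⟨d, e, hde⟩ := exists_pair_ne dom
  intro z hz
  refine mem_Isem_of_forall_notMem ⟨ha.const_mem_sem_constInterp d, rfl⟩ e ?_
  rintro ν - ⟨hma, hxy : update (const V d) z e x = ν y⟩
  have hza : z ∉ a.Isyn := fun hza => ha.notMem_sem_constInterp_of_mem_Isyn hde hza ν hma
  rw [ha.sem_constInterp] at hma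
  by_cases hzO : z ∈ a.Osyn
  · rw [eq_const_of_update_const_mem_constStep hma hzO] at hxy
    obtain rfl : z = x := by grind [Isyn]
    exact hde (by simpa using hxy.symm)
  · rw [eq_update_const_of_mem_constStep hma hzO] at hxy
    exact update_const_apply_ne hde (by grind [Isyn]) (by grind [Isyn]) hxy

theorem Isyn_sell_subset_Isem (ha : a.IsAtom) :
    ↑(sell x y a).Isyn ⊆ Isem (gsem dom (sell x y a)) := by
  obtain ⟨d, e, hde⟩ := exists_pair_ne dom
  intro z hz
  refine mem_Isem_of_forall_notMem ⟨ha.const_mem_sem_constInterp d, rfl⟩ e ?_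
  rintro ν - ⟨hma, hxy⟩
  have hza : z ∉ a.Isyn := fun hza => ha.notMem_sem_constInterp_of_mem_Isyn hde hza ν hma
  exact update_const_apply_ne hde (by grind [Isyn]) (by grind [Isyn]) hxy

theorem Isyn_selr_subset_Isem (ha : a.IsAtom) :
    ↑(selr x y a).Isyn ⊆ Isem (gsem dom (selr x y a)) := by
  obtain ⟨d, e, hde⟩ := exists_pair_ne dom
  intro z hz
  refine mem_Isem_of_forall_notMem ⟨ha.const_mem_sem_constInterp d, rfl⟩ e ?_
  rintro ν - ⟨hma, hxy : ν x = ν y⟩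
  have hza : z ∉ a.Isyn := fun hza => ha.notMem_sem_constInterp_of_mem_Isyn hde hza ν hma
  have hzO : z ∉ a.Osyn := by grind [Isyn]
  rw [eq_update_const_of_mem_constStep ((ha.sem_constInterp d).subset hma) hzO] at hxy
  exact update_const_apply_ne hde (by grind [Isyn]) (by grind [Isyn]) hxy

end Inputs

end LIF

namespace PrecisionShape

open LIF

variable {Name V dom : Type*} {voc : Vocab Name} [DecidableEq V] [Nontrivial dom]
  {α : LIF Name V voc}

theorem Osyn_subset_Osem (h : PrecisionShape α) : ↑α.Osyn ⊆ Osem (gsem dom α) :=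
  match α, h with
  | .atom .., h => IsAtom.Osyn_subset_Osem h
  | .union _ _, h => Osyn_union_subset_Osem h.isAtom_left h.isAtom_right
  | .inter _ _, h => Osyn_inter_subset_Osem h.isAtom_left h.isAtom_right
  | .diff _ _, h => Osyn_diff_subset_Osem h
  | .comp _ _, h => Osyn_comp_subset_Osem h.isAtom_left h.isAtom_right
  | .cyll _ _, h => Osyn_cyll_subset_Osem h
  | .cylr _ _, h => Osyn_cylr_subset_Osem h
  | .sellr _ _ _, h => Osyn_sellr_subset_Osem h
  | .sell _ _ _, h => Osyn_sell_subset_Osem h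
  | .selr _ _ _, h => Osyn_selr_subset_Osem h

theorem Isyn_subset_Isem (h : PrecisionShape α) : ↑α.Isyn ⊆ Isem (gsem dom α) :=
  match α, h with
  | .atom .., h => IsAtom.Isyn_subset_Isem h
  | .union _ _, h => Isyn_union_subset_Isem h
  | .inter _ _, h => Isyn_inter_subset_Isem h.isAtom_left h.isAtom_right
  | .diff _ _, h => Isyn_diff_subset_Isem h
  | .comp _ _, h => Isyn_comp_subset_Isem h.isAtom_left h.isAtom_right
  | .cyll _ _, h => Isyn_cyll_subset_Isem h
  | .cylr _ _, h => Isyn_cylr_subset_Isem h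
  | .sellr _ _ _, h => Isyn_sellr_subset_Isem h
  | .sell _ _ _, h => Isyn_sell_subset_Isem h
  | .selr _ _ _, h => Isyn_selr_subset_Isem h

end PrecisionShape

theorem stmt11_general {Name V : Type*} {voc : Vocab Name} [DecidableEq V]
    (dom : Type*) [Nontrivial dom] (α : LIF Name V voc) (hshape : PrecisionShape α) :
    Osem (LIF.gsem dom α) = ↑α.Osyn ∧ Isem (LIF.gsem dom α) = ↑α.Isyn :=
  ⟨(LIF.Osem_gsem_subset_Osyn α).antisymm hshape.Osyn_subset_Osem,
    (LIF.Isem_gsem_subset_Isyn α).antisymm hshape.Isyn_subset_Isem⟩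

/-- Precision Theorem. -/
theorem stmt11 {Name V : Type*} [Nonempty Name] {voc : Vocab Name} [DecidableEq V]
    (dom : Type*) [Countable dom] [Infinite dom]
    (α : LIF Name V voc) (hshape : PrecisionShape α) :
    Osem (LIF.gsem dom α) = ↑α.Osyn ∧ Isem (LIF.gsem dom α) = ↑α.Isyn :=
  stmt11_general dom α hshape
end

section
/- Let x̄ = (x1,…,xk) and ȳ = (y1,…,yk) be disjoint tuples of distinct variables of the same length. Then for every BRV B: mvr_{x̄→ȳ}(B) = σ^lr_{x1=x1}(… σ^lr_{xk=xk}(cyl^r_{X}(σ^r_{x1=y1}(… σ^r_{xk=yk}(cyl^r_{Y}(B)) …))) …), where X and Y are the sets of variables occurring in x̄ and ȳ respectively; i.e., the right move equals the result of applying right cylindrification on Y, then the right selections σ^r_{xi=yi} for i = 1,…,k, then right cylindrification on X, then the left-to-right selections σ^lr_{xi=xi} for i = 1,…,k. -/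
/-- The right move operation `mvr_{x̄→ȳ}`. -/
def mvr {V dom : Type*} {k : ℕ} (xs ys : Fin k → V) (B : BRV V dom) : BRV V dom :=
  {p | (∀ i, p.2 (xs i) = p.1 (xs i)) ∧
       ∃ ν2, (p.1, ν2) ∈ B ∧ (∀ i, p.2 (ys i) = ν2 (xs i)) ∧
         BRV.AgreeOn ν2 p.2 (Set.range xs ∪ Set.range ys)ᶜ}

/-!
For disjoint `X` and `Y`, the valuation hidden between the two right cylindrifications is forced:
if `ν` and `ν'` agree outside `Y`, and `ν'` and `μ` agree outside `X`, then `ν'` is `ν` on `X` and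
`μ` off `X`. Hence a selection `xᵢ = yᵢ` on `ν'` reads `ν xᵢ = μ yᵢ`, which is the condition in the
right move.
-/

theorem foldr_sep {α ι : Type*} (P : ι → α → Prop) (A : Set α) (l : List ι) :
    l.foldr (fun i acc => {a ∈ acc | P i a}) A = {a ∈ A | ∀ i ∈ l, P i a} := by
  induction l with
  | nil => simp
  | cons i l ih =>
    ext a
    rw [List.foldr_cons, ih]
    simp only [Set.mem_sep_iff, List.forall_mem_cons, and_assoc, and_comm (a := P i a)]

namespace BRV

variable {V dom ι : Type*}

theorem foldr_selr (xs ys : ι → V) (A : BRV V dom) (l : List ι) :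
    l.foldr (fun i acc => selr (xs i) (ys i) acc) A =
      {p ∈ A | ∀ i ∈ l, p.2 (xs i) = p.2 (ys i)} :=
  foldr_sep _ A l

theorem foldr_sellr (xs ys : ι → V) (A : BRV V dom) (l : List ι) :
    l.foldr (fun i acc => sellr (xs i) (ys i) acc) A =
      {p ∈ A | ∀ i ∈ l, p.1 (xs i) = p.2 (ys i)} :=
  foldr_sep _ A l

theorem agreeOn_compl_and_agreeOn_compl_iff {X Y : Set V} [∀ v, Decidable (v ∈ X)]
    (hXY : Disjoint X Y) {ν ν' μ : V → dom} :
    AgreeOn ν ν' Yᶜ ∧ AgreeOn ν' μ Xᶜ ↔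
      ν' = X.piecewise ν μ ∧ AgreeOn ν μ (X ∪ Y)ᶜ := by
  constructor
  · rintro ⟨hY, hX⟩
    refine ⟨funext fun v => ?_, fun v hv => ?_⟩
    · by_cases hv : v ∈ X
      · rw [Set.piecewise_eq_of_mem _ _ _ hv, hY v (hXY.notMem_of_mem_left hv)]
      · rw [Set.piecewise_eq_of_notMem _ _ _ hv, hX v hv]
    · exact (hY v fun h => hv (Or.inr h)).trans (hX v fun h => hv (Or.inl h))
  · rintro ⟨rfl, h⟩
    refine ⟨fun v hvY => ?_, fun v hvX => Set.piecewise_eq_of_notMem _ _ _ hvX⟩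
    by_cases hvX : v ∈ X
    · rw [Set.piecewise_eq_of_mem _ _ _ hvX]
    · rw [Set.piecewise_eq_of_notMem _ _ _ hvX, h v (not_or.mpr ⟨hvX, hvY⟩)]

theorem mem_cylr_sep_cylr_iff {X Y : Set V} [∀ v, Decidable (v ∈ X)] (hXY : Disjoint X Y)
    {P : (V → dom) × (V → dom) → Prop} {B : BRV V dom} {p : (V → dom) × (V → dom)} :
    p ∈ cylr X {q ∈ cylr Y B | P q} ↔
      ∃ ν, (p.1, ν) ∈ B ∧ P (p.1, X.piecewise ν p.2) ∧ AgreeOn ν p.2 (X ∪ Y)ᶜ := by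
  constructor
  · rintro ⟨ν', ⟨⟨ν, hB, hY⟩, hP⟩, hX⟩
    obtain ⟨rfl, h⟩ := (agreeOn_compl_and_agreeOn_compl_iff hXY).mp ⟨hY, hX⟩
    exact ⟨ν, hB, hP, h⟩
  · rintro ⟨ν, hB, hP, h⟩
    obtain ⟨hY, hX⟩ := (agreeOn_compl_and_agreeOn_compl_iff hXY).mpr ⟨rfl, h⟩
    exact ⟨X.piecewise ν p.2, ⟨⟨ν, hB, hY⟩, hP⟩, hX⟩

end BRV

theorem stmt15_general {V dom : Type*} {k : ℕ} (xs ys : Fin k → V)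
    (hdisj : Disjoint (Set.range xs) (Set.range ys)) (B : BRV V dom) :
    mvr xs ys B =
      (List.finRange k).foldr (fun i acc => BRV.sellr (xs i) (xs i) acc)
        (BRV.cylr (Set.range xs)
          ((List.finRange k).foldr (fun i acc => BRV.selr (xs i) (ys i) acc)
            (BRV.cylr (Set.range ys) B))) := by
  classical
  have piecewise_xs (ν μ : V → dom) (i : Fin k) :
      (Set.range xs).piecewise ν μ (xs i) = ν (xs i) :=
    Set.piecewise_eq_of_mem _ _ _ (Set.mem_range_self i)
  have piecewise_ys (ν μ : V → dom) (i : Fin k) :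
      (Set.range xs).piecewise ν μ (ys i) = μ (ys i) :=
    Set.piecewise_eq_of_notMem _ _ _ (hdisj.notMem_of_mem_right (Set.mem_range_self i))
  ext p
  rw [BRV.foldr_sellr, BRV.foldr_selr, Set.mem_sep_iff, BRV.mem_cylr_sep_cylr_iff hdisj, and_comm]
  simp only [mvr, Set.mem_ofPred_eq, List.mem_finRange, forall_const, piecewise_xs, piecewise_ys,
    eq_comm]

theorem stmt15 (V dom : Type*) [Countable dom] [Infinite dom] {k : ℕ}
    (xs ys : Fin k → V)
    (hxinj : Function.Injective xs) (hyinj : Function.Injective ys)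
    (hdisj : Disjoint (Set.range xs) (Set.range ys))
    (B : BRV V dom) :
    mvr xs ys B =
      (List.finRange k).foldr (fun i acc => BRV.sellr (xs i) (xs i) acc)
        (BRV.cylr (Set.range xs)
          ((List.finRange k).foldr (fun i acc => BRV.selr (xs i) (ys i) acc)
            (BRV.cylr (Set.range ys) B))) :=
  stmt15_general xs ys hdisj B
end

section
/- Let A and B be BRVs and let x̄ and ȳ be disjoint tuples of distinct variables of the same length such that A and B are each inertially cylindrified on the set of variables occurring in ȳ. Then A ; B = mvr_{ȳ→x̄}(A ; mvr_{x̄→ȳ}(B)). -/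
/-- A BRV is inertially cylindrified on a set `X` of variables. -/
def BRV.InertCyl {V dom : Type*} (B : BRV V dom) (X : Set V) : Prop :=
  (∀ p ∈ B, ∀ x ∈ X, p.1 x = p.2 x) ∧
  (∀ p ∈ B, ∀ ν' : V → dom, (patch p.1 ν' X, patch p.2 ν' X) ∈ B)

/-! Moving `x̄` to `ȳ` and then `ȳ` back to `x̄` undoes the first move, except that the values
on `ȳ` are now those of the left valuation; inertia on `ȳ` makes these the original values. -/

section IsRightMove

variable {V dom ι : Type*} {xs ys : ι → V} {ν₁ ν₂ ν₃ μ μ' : V → dom}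

/-- The condition on valuations underlying the right move from `x̄` to `ȳ`: the pair `(ν₁, ν₂)` is
moved to `(ν₁, μ)`. It is a relation rather than a function of `ν₁` and `ν₂` since `μ` need not
exist for arbitrary tuples. -/
structure IsRightMove (xs ys : ι → V) (ν₁ ν₂ μ : V → dom) : Prop where
  apply_source : ∀ i, μ (xs i) = ν₁ (xs i)
  apply_target : ∀ i, μ (ys i) = ν₂ (xs i)
  agreeOn_compl : BRV.AgreeOn ν₂ μ (Set.range xs ∪ Set.range ys)ᶜ

theorem exists_isRightMove (hys : Function.Injective ys)
    (hdisj : Disjoint (Set.range xs) (Set.range ys)) (ν₁ ν₂ : V → dom) :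
    ∃ μ, IsRightMove xs ys ν₁ ν₂ μ := by
  classical
  refine ⟨Function.extend ys (ν₂ ∘ xs) ((Set.range xs).piecewise ν₁ ν₂), fun i => ?_,
    hys.extend_apply _ _, fun v hv => ?_⟩
  · have hi : xs i ∉ Set.range ys := hdisj.notMem_of_mem_left (Set.mem_range_self i)
    rw [Function.extend_apply' _ _ _ hi, Set.piecewise_eq_of_mem _ _ _ (Set.mem_range_self i)]
  · obtain ⟨hvx, hvy⟩ : v ∉ Set.range xs ∧ v ∉ Set.range ys := not_or.mp hv
    rw [Function.extend_apply' _ _ _ hvy, Set.piecewise_eq_of_notMem _ _ _ hvx]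

theorem IsRightMove.move_back (hmove : IsRightMove xs ys ν₂ ν₃ μ)
    (hagree : BRV.AgreeOn ν₁ ν₃ (Set.range ys)) : IsRightMove ys xs ν₁ μ ν₃ where
  apply_source i := (hagree _ (Set.mem_range_self i)).symm
  apply_target i := (hmove.apply_target i).symm
  agreeOn_compl v hv := (hmove.agreeOn_compl v (Set.union_comm _ _ ▸ hv)).symm

theorem IsRightMove.unique (hμ : IsRightMove xs ys ν₁ ν₂ μ) (hμ' : IsRightMove xs ys ν₁ ν₂ μ') :
    μ = μ' := by
  funext v
  by_cases hv : v ∈ Set.range xs ∪ Set.range ys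
  · rcases hv with ⟨i, rfl⟩ | ⟨i, rfl⟩
    · rw [hμ.apply_source, hμ'.apply_source]
    · rw [hμ.apply_target, hμ'.apply_target]
  · rw [← hμ.agreeOn_compl v hv, hμ'.agreeOn_compl v hv]

end IsRightMove

section InertialBRV

variable {V dom : Type*} {A B : BRV V dom}

theorem mem_mvr_iff {k : ℕ} {xs ys : Fin k → V} {p : (V → dom) × (V → dom)} :
    p ∈ mvr xs ys B ↔ ∃ ν, (p.1, ν) ∈ B ∧ IsRightMove xs ys p.1 ν p.2 :=
  ⟨fun ⟨hxs, ν, hν, hys, hagree⟩ => ⟨ν, hν, hxs, hys, hagree⟩,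
    fun ⟨ν, hν, hxs, hys, hagree⟩ => ⟨hxs, ν, hν, hys, hagree⟩⟩

/-- A BRV is inertial on `X` if its pairs leave the variables in `X` unchanged: the first half of
being inertially cylindrified on `X`. -/
def BRV.Inertial (B : BRV V dom) (X : Set V) : Prop :=
  ∀ p ∈ B, BRV.AgreeOn p.1 p.2 X

theorem BRV.InertCyl.inertial {X : Set V} (hB : B.InertCyl X) : B.Inertial X :=
  hB.1

theorem BRV.Inertial.comp {X : Set V} (hA : A.Inertial X) (hB : B.Inertial X) :
    (A.comp B).Inertial X :=
  fun _ ⟨_, hpA, hpB⟩ x hx => (hA _ hpA x hx).trans (hB _ hpB x hx)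

theorem stmt16_general {k : ℕ} {xs ys : Fin k → V} (hys : Function.Injective ys)
    (hdisj : Disjoint (Set.range xs) (Set.range ys))
    (hA : A.Inertial (Set.range ys)) (hB : B.Inertial (Set.range ys)) :
    A.comp B = mvr ys xs (A.comp (mvr xs ys B)) := by
  have hAB : (A.comp B).Inertial (Set.range ys) := hA.comp hB
  ext ⟨ν₁, ν₂⟩
  rw [mem_mvr_iff]
  constructor
  · rintro ⟨ν₃, h₁₃, h₃₂⟩
    obtain ⟨μ, hμ⟩ := exists_isRightMove hys hdisj ν₃ ν₂
    exact ⟨μ, ⟨ν₃, h₁₃, mem_mvr_iff.mpr ⟨ν₂, h₃₂, hμ⟩⟩, hμ.move_back (hAB _ ⟨ν₃, h₁₃, h₃₂⟩)⟩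
  · rintro ⟨μ, ⟨ν₃, h₁₃, h₃μ⟩, hback⟩
    obtain ⟨ν, h₃ν, hμ⟩ := mem_mvr_iff.mp h₃μ
    obtain rfl : ν = ν₂ := (hμ.move_back (hAB (ν₁, ν) ⟨ν₃, h₁₃, h₃ν⟩)).unique hback
    exact ⟨ν₃, h₁₃, h₃ν⟩

end InertialBRV

theorem stmt16 (V dom : Type*) [Countable dom] [Infinite dom] {k : ℕ}
    (xs ys : Fin k → V)
    (hxinj : Function.Injective xs) (hyinj : Function.Injective ys)
    (hdisj : Disjoint (Set.range xs) (Set.range ys))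
    (A B : BRV V dom)
    (hA : A.InertCyl (Set.range ys)) (hB : B.InertCyl (Set.range ys)) :
    BRV.comp A B = mvr ys xs (BRV.comp A (mvr xs ys B)) :=
  stmt16_general hyinj hdisj hA.inertial hB.inertial
end
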